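/- The explosion principles fail for modalities in KG²: there exists a crisp frame F, a KG² model on F, and a world w such that v₁(□(p ∧ ¬p) → □q, w) < 1, and there exists a crisp frame F', a KG² model on F', and a world w' such that v₁(◇(p ∧ ¬p) → ◇q, w') < 1. Hence neither □(p∧¬p)→□q nor ◇(p∧¬p)→◇q is KG²-valid on all crisp frames. -/

import Mathlib

/-!
A single reflexive world refutes both principles. There the modalities are the identity, and the
two supports `v₁`, `v₂` of a variable are independent, so `p` may be glutty: `v p = (1, 1)` gives
`v₁(p ∧ ¬p) = 1`. If in addition `v₁(q) = 0`, both implications have `v₁`-value `1 →G 0 = 0`.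
-/


/- Truth values: the real unit interval [0,1] with its complete lattice structure
   (so `sInf ∅ = 1` and `sSup ∅ = 0`). -/
instance : Fact ((0:ℝ) ≤ 1) := ⟨zero_le_one⟩

abbrev TV : Type := unitInterval

/-- Gödel implication: `a →G b = 1` if `a ≤ b`, else `b`. -/
noncomputable def gimp (a b : TV) : TV := if a ≤ b then 1 else b

/-- Gödel coimplication: `a ⧀G b = 0` if `a ≤ b`, else `a`. -/
noncomputable def gcoimp (a b : TV) : TV := if a ≤ b then 0 else a

/-- Formulas of `biL¬_{□,◇}` over the countable variable set `ℕ`. -/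
inductive Formula : Type
  | var : ℕ → Formula
  | neg : Formula → Formula
  | and : Formula → Formula → Formula
  | or : Formula → Formula → Formula
  | imp : Formula → Formula → Formula
  | coimp : Formula → Formula → Formula
  | box : Formula → Formula
  | dia : Formula → Formula

/-- KG² valuation pair `(v₁, v₂)` on a crisp frame `(W, R)`:
`(kval R v φ w).1 = v₁(φ,w)` and `(kval R v φ w).2 = v₂(φ,w)`. -/
noncomputable def kval {W : Type} (R : W → W → Prop) (v : ℕ → W → TV × TV) :
    Formula → W → TV × TV
  | .var p, w => v p w
  | .neg φ, w => ((kval R v φ w).2, (kval R v φ w).1)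
  | .and φ ψ, w => ((kval R v φ w).1 ⊓ (kval R v ψ w).1, (kval R v φ w).2 ⊔ (kval R v ψ w).2)
  | .or φ ψ, w => ((kval R v φ w).1 ⊔ (kval R v ψ w).1, (kval R v φ w).2 ⊓ (kval R v ψ w).2)
  | .imp φ ψ, w =>
      (gimp (kval R v φ w).1 (kval R v ψ w).1, gcoimp (kval R v ψ w).2 (kval R v φ w).2)
  | .coimp φ ψ, w =>
      (gcoimp (kval R v φ w).1 (kval R v ψ w).1, gimp (kval R v ψ w).2 (kval R v φ w).2)
  | .box φ, w =>
      (sInf ((fun w' => (kval R v φ w').1) '' {w' | R w w'}),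
       sSup ((fun w' => (kval R v φ w').2) '' {w' | R w w'}))
  | .dia φ, w =>
      (sSup ((fun w' => (kval R v φ w').1) '' {w' | R w w'}),
       sInf ((fun w' => (kval R v φ w').2) '' {w' | R w w'}))

/-- The valuation on the one-world reflexive frame with `v p = (1, 1)` for `p = .var 0` and
`(0, 0)` for every other variable. -/
noncomputable def gluttyVal (p : ℕ) (_ : Unit) : TV × TV := if p = 0 then (1, 1) else (0, 0)

lemma kval_box_explosion :
    (kval (fun _ _ => True) gluttyVal
      (.imp (.box (.and (.var 0) (.neg (.var 0)))) (.box (.var 1))) ()).1 = 0 := by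
  simp [kval, gluttyVal, gimp]

lemma kval_dia_explosion :
    (kval (fun _ _ => True) gluttyVal
      (.imp (.dia (.and (.var 0) (.neg (.var 0)))) (.dia (.var 1))) ()).1 = 0 := by
  simp [kval, gluttyVal, gimp]

/-- the modal explosion principles fail in KG²: `□(p∧¬p)→□q` and
`◇(p∧¬p)→◇q` can take a `v₁`-value `< 1`, hence neither is KG²-valid on all crisp frames. -/
theorem stmt11 :
    (∃ (W : Type) (_ : Nonempty W) (R : W → W → Prop) (v : ℕ → W → TV × TV) (w : W),
      (kval R v (.imp (.box (.and (.var 0) (.neg (.var 0)))) (.box (.var 1))) w).1 < 1) ∧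
    (∃ (W : Type) (_ : Nonempty W) (R : W → W → Prop) (v : ℕ → W → TV × TV) (w : W),
      (kval R v (.imp (.dia (.and (.var 0) (.neg (.var 0)))) (.dia (.var 1))) w).1 < 1) ∧
    ¬ (∀ (W : Type), Nonempty W → ∀ (R : W → W → Prop) (v : ℕ → W → TV × TV) (w : W),
        (kval R v (.imp (.box (.and (.var 0) (.neg (.var 0)))) (.box (.var 1))) w).1 = 1 ∧
        (kval R v (.imp (.box (.and (.var 0) (.neg (.var 0)))) (.box (.var 1))) w).2 = 0) ∧
    ¬ (∀ (W : Type), Nonempty W → ∀ (R : W → W → Prop) (v : ℕ → W → TV × TV) (w : W),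
        (kval R v (.imp (.dia (.and (.var 0) (.neg (.var 0)))) (.dia (.var 1))) w).1 = 1 ∧
        (kval R v (.imp (.dia (.and (.var 0) (.neg (.var 0)))) (.dia (.var 1))) w).2 = 0) := by
  refine ⟨⟨Unit, ⟨()⟩, fun _ _ => True, gluttyVal, (), ?_⟩,
    ⟨Unit, ⟨()⟩, fun _ _ => True, gluttyVal, (), ?_⟩, fun h => ?_, fun h => ?_⟩
  · rw [kval_box_explosion]
    exact zero_lt_one
  · rw [kval_dia_explosion]
    exact zero_lt_one
  · have h1 := (h Unit ⟨()⟩ (fun _ _ => True) gluttyVal ()).1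
    rw [kval_box_explosion] at h1
    exact zero_ne_one h1
  · have h1 := (h Unit ⟨()⟩ (fun _ _ => True) gluttyVal ()).1
    rw [kval_dia_explosion] at h1
    exact zero_ne_one h1
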